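/- arXiv:2602.19032 — 2 statements merged into one kernel-verified Lean document; each statement's English description precedes it below -/
import Mathlib

section
/- The function ε1(τ) = θ2(0,τ)^4 θ3(0,τ)^4/16 is a modular form of weight 4 over the congruence subgroup Γ0(2): it is holomorphic on the upper half-plane, holomorphic at the cusps, and satisfies ε1((aτ+b)/(cτ+d)) = (cτ+d)^4 ε1(τ) for every (a b; c d) ∈ Γ0(2). -/
open Complex Real Matrix CongruenceSubgroup

local notation "SL(2,ℤ)" => Matrix.SpecialLinearGroup (Fin 2) ℤ
local notation "ℍ" => UpperHalfPlane

/-- The nome `q = e^{2πiτ}`. -/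
noncomputable def qq (τ : ℂ) : ℂ := Complex.exp (2 * π * Complex.I * τ)

/-- The half-nome `q^{1/2} = e^{πiτ}`. -/
noncomputable def qh (τ : ℂ) : ℂ := Complex.exp (π * Complex.I * τ)

/-- The Jacobi theta constant `θ₁(0,τ) = 2 q^{1/8} ∏_{j≥1} (1-q^j)(1+q^j)^2`. -/
noncomputable def theta1 (τ : ℂ) : ℂ :=
  2 * Complex.exp (π * Complex.I * τ / 4) *
    ∏' j : ℕ, ((1 - qq τ ^ (j + 1)) * (1 + qq τ ^ (j + 1)) ^ 2)

/-- The Jacobi theta constant `θ₂(0,τ) = ∏_{j≥1} (1-q^j)(1-q^{j-1/2})^2`. -/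
noncomputable def theta2 (τ : ℂ) : ℂ :=
  ∏' j : ℕ, ((1 - qq τ ^ (j + 1)) * (1 - qh τ ^ (2 * j + 1)) ^ 2)

/-- The Jacobi theta constant `θ₃(0,τ) = ∏_{j≥1} (1-q^j)(1+q^{j-1/2})^2`. -/
noncomputable def theta3 (τ : ℂ) : ℂ :=
  ∏' j : ℕ, ((1 - qq τ ^ (j + 1)) * (1 + qh τ ^ (2 * j + 1)) ^ 2)


/-- `ε₁(τ) = θ₂(0,τ)⁴ θ₃(0,τ)⁴/16`. -/
noncomputable def epsilon1 (τ : ℂ) : ℂ := theta2 τ ^ 4 * theta3 τ ^ 4 / 16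

/-!
Let `φ(q) = ∏ (1-qⁿ)` and `P(q) = ∏ (1-q^{2n-1})` with `n ≥ 1`, so that `P(q) φ(q²) = φ(q)` and
`P(q) P(-q) = P(q²)`. As `θ₂ = φ(q) P(q^{1/2})²` and `θ₃ = φ(q) P(-q^{1/2})²`, one gets
`θ₂ θ₃ = η(τ)⁴ / η(2τ)²`, hence `16 ε₁ = η(τ)¹⁶ / η(2τ)⁸`. The transformation law of `η` under `S`
sends this quotient to `16 η(τ)¹⁶ / η(τ/2)⁸`; the former is invariant under `T`, the latter under
`T²`, and both are bounded at `i∞`. This suffices because `Γ₀(2)` is generated by `T` and `ST²S⁻¹`,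
with right coset representatives `1`, `S` and `ST` in `SL₂(ℤ)`.
-/

open Filter Function ModularForm ModularGroup Topology
open scoped Manifold

local notation "𝕢" => Periodic.qParam

section Gamma0Two

lemma coe_toRightFun_eq_of_mul_inv_mem {G : Type*} [Group G] {H : Subgroup G} {R : Set G}
    (h : Subgroup.IsComplement (H : Set G) R) {g r : G} (hr : r ∈ R) (hgr : g * r⁻¹ ∈ H) :
    (h.toRightFun g : G) = r :=
  congrArg Subtype.val <| (Subgroup.isComplement_iff_existsUnique_mul_inv_mem.mp h g).unique
    (h.mul_inv_toRightFun_mem g) (y₂ := ⟨r, hr⟩) hgr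

lemma mul_inv_mem_Gamma0_iff {N : ℕ} (γ r : SL(2,ℤ)) :
    γ * r⁻¹ ∈ Gamma0 N ↔ (γ 1 0 * r 1 1 : ZMod N) = γ 1 1 * r 1 0 := by
  rw [Gamma0_mem]
  simp [adjugate_fin_two, mul_apply, add_neg_eq_zero]

-- A right coset of `Γ₀(2)` is determined by the bottom row mod 2, a nonzero vector of `𝔽₂²`.
lemma isComplement_Gamma0_two :
    Subgroup.IsComplement (Gamma0 2 : Set SL(2,ℤ)) {1, S, S * T} := by
  rw [Subgroup.isComplement_iff_existsUnique_mul_inv_mem]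
  intro γ
  have hdet : (γ 0 0 * γ 1 1 - γ 0 1 * γ 1 0 : ZMod 2) = 1 := by
    exact_mod_cast congrArg (Int.cast : ℤ → ZMod 2) ((det_fin_two _).symm.trans γ.det_coe)
  have hrow (a b c d : ZMod 2) (h : a * d - b * c = 1) :
      (c = 0 ∧ d = 1) ∨ (c = 1 ∧ d = 0) ∨ (c = 1 ∧ d = 1) := by
    revert a b c d
    decide
  simp only [SetLike.mem_coe, mul_inv_mem_Gamma0_iff]
  rcases hrow _ _ _ _ hdet with ⟨hc, hd⟩ | ⟨hc, hd⟩ | ⟨hc, hd⟩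
  · refine ⟨⟨1, by simp⟩, ?_, ?_⟩ <;> simp [hc, hd, coe_S, coe_T]
  · refine ⟨⟨S, by simp⟩, ?_, ?_⟩ <;> simp [hc, hd, coe_S, coe_T]
  · refine ⟨⟨S * T, by simp⟩, ?_, ?_⟩ <;> simp [hc, hd, coe_S, coe_T]

-- Schreier's lemma for the coset representatives `1, S, ST` and the generators `S, T` of `SL₂(ℤ)`.
lemma Gamma0_two_eq_closure : Gamma0 2 = Subgroup.closure {T, S * T ^ 2 * S⁻¹} := by
  have hgen : ({T, S * T ^ 2 * S⁻¹} : Set SL(2,ℤ)) ⊆ Gamma0 2 := by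
    rintro _ (rfl | rfl) <;> rw [SetLike.mem_coe, Gamma0_mem] <;> decide
  refine le_antisymm ?_ ((Subgroup.closure_le _).mpr hgen)
  set B := S * T ^ 2 * S⁻¹ with hB
  have hT_mem : T ∈ Subgroup.closure {T, B} := Subgroup.subset_closure (by simp)
  have hB_mem : B ∈ Subgroup.closure {T, B} := Subgroup.subset_closure (by simp)
  have schreier {g r w : SL(2,ℤ)} (hr : r ∈ ({1, S, S * T} : Set SL(2,ℤ))) (hg : g = w * r)
      (hw : w ∈ Subgroup.closure {T, B}) :
      g * (isComplement_Gamma0_two.toRightFun g : SL(2,ℤ))⁻¹ ∈ Subgroup.closure {T, B} := by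
    have hgr : g * r⁻¹ = w := by rw [hg, mul_inv_cancel_right]
    have hgr_mem : g * r⁻¹ ∈ Gamma0 2 := hgr ▸ (Subgroup.closure_le _).mpr hgen hw
    rwa [coe_toRightFun_eq_of_mul_inv_mem _ hr hgr_mem, hgr]
  rw [← Subgroup.closure_mul_image_eq isComplement_Gamma0_two (by simp)
    SpecialLinearGroup.SL2Z_generators, Subgroup.closure_le]
  rintro _ ⟨_, ⟨r, rfl | rfl | rfl, s, rfl | rfl, rfl⟩, rfl⟩
  · exact schreier (r := S) (by simp) (w := 1) rfl (one_mem _)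
  · exact schreier (r := 1) (by simp) (by simp) hT_mem
  · exact schreier (r := 1) (by simp) (w := (T * B) ^ 2) (by decide)
      (pow_mem (mul_mem hT_mem hB_mem) 2)
  · exact schreier (r := S * T) (by simp) (by simp) (one_mem _)
  · exact schreier (r := S * T) (by simp) (w := (B * T)⁻¹) (by decide)
      (inv_mem (mul_mem hB_mem hT_mem))
  · exact schreier (r := S) (by simp) (w := B) (by simp [hB, pow_two, mul_assoc]) hB_mem

lemma slash_eq_of_mem_closure {k : ℤ} {f : ℍ → ℂ} {s : Set SL(2,ℤ)}
    (hs : ∀ γ ∈ s, f ∣[k] γ = f) {γ : SL(2,ℤ)} (hγ : γ ∈ Subgroup.closure s) :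
    f ∣[k] γ = f := by
  induction hγ using Subgroup.closure_induction with
  | mem γ hγ => exact hs γ hγ
  | one => exact SlashAction.slash_one k f
  | mul γ δ _ _ hγ hδ => rw [SlashAction.slash_mul, hγ, hδ]
  | inv γ _ hγ =>
    conv_lhs => rw [← hγ]
    rw [← SlashAction.slash_mul, mul_inv_cancel, SlashAction.slash_one]

variable {k : ℤ} {f : ℍ → ℂ}

lemma slash_eq_of_mem_Gamma0_two (hT : f ∣[k] T = f) (hST : (f ∣[k] S) ∣[k] (T ^ 2) = f ∣[k] S)
    {γ : SL(2,ℤ)} (hγ : γ ∈ Gamma0 2) : f ∣[k] γ = f := by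
  rw [Gamma0_two_eq_closure] at hγ
  refine slash_eq_of_mem_closure ?_ hγ
  rintro _ (rfl | rfl)
  · exact hT
  · rw [SlashAction.slash_mul, SlashAction.slash_mul, hST, ← SlashAction.slash_mul,
      mul_inv_cancel, SlashAction.slash_one]

lemma isBoundedAtImInfty_slash_of_Gamma0_two (hf : ∀ γ ∈ Gamma0 2, f ∣[k] γ = f)
    (hf_bdd : UpperHalfPlane.IsBoundedAtImInfty f)
    (hS_bdd : UpperHalfPlane.IsBoundedAtImInfty (f ∣[k] S)) (γ : SL(2,ℤ)) :
    UpperHalfPlane.IsBoundedAtImInfty (f ∣[k] γ) := by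
  obtain ⟨⟨r, hr⟩, hγr, -⟩ :=
    Subgroup.isComplement_iff_existsUnique_mul_inv_mem.mp isComplement_Gamma0_two γ
  have hγ : f ∣[k] γ = f ∣[k] r := by
    rw [← inv_mul_cancel_right γ r, SlashAction.slash_mul, hf _ hγr]
  rw [hγ]
  rcases hr with rfl | rfl | rfl
  · rwa [SlashAction.slash_one]
  · exact hS_bdd
  · rw [SlashAction.slash_mul, SL_slash]
    exact hS_bdd.slash _ (by simp [coe_T])

lemma exists_modularForm_Gamma0_two
    (hholo : MDifferentiable 𝓘(ℂ) 𝓘(ℂ) f)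
    (hT : f ∣[k] T = f) (hST : (f ∣[k] S) ∣[k] (T ^ 2) = f ∣[k] S)
    (hf_bdd : UpperHalfPlane.IsBoundedAtImInfty f)
    (hS_bdd : UpperHalfPlane.IsBoundedAtImInfty (f ∣[k] S)) :
    ∃ F : ModularForm (Gamma0 2) k, ⇑F = f := by
  have hinv : ∀ γ ∈ Gamma0 2, f ∣[k] γ = f := fun γ ↦ slash_eq_of_mem_Gamma0_two hT hST
  refine ⟨{ toFun := f, slash_action_eq' := ?_, holo' := hholo, bdd_at_cusps' := ?_ }, rfl⟩
  · rintro _ ⟨γ, hγ, rfl⟩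
    exact hinv γ hγ
  · intro c hc
    rw [Subgroup.IsArithmetic.isCusp_iff_isCusp_SL2Z] at hc
    rw [OnePoint.isBoundedAt_iff_forall_SL2Z hc]
    exact fun γ _ ↦ isBoundedAtImInfty_slash_of_Gamma0_two hinv hf_bdd hS_bdd γ

lemma slash_T_zpow_apply (n : ℤ) (τ : ℍ) : (f ∣[k] (T ^ n)) τ = f ((n : ℝ) +ᵥ τ) := by
  rw [SL_slash_apply, UpperHalfPlane.modular_T_zpow_smul,
    ModularGroup.denom_apply, coe_T_zpow]
  simp

end Gamma0Two

section EulerFunction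

/-- Euler's function `φ(q) = ∏_{n≥1} (1-qⁿ)`. -/
noncomputable def eulerFunction (q : ℂ) : ℂ := ∏' n : ℕ, (1 - q ^ (n + 1))

/-- The odd part `∏_{n≥0} (1-q^{2n+1})` of Euler's function. -/
noncomputable def oddEulerFunction (q : ℂ) : ℂ := ∏' n : ℕ, (1 - q ^ (2 * n + 1))

lemma multipliable_one_sub_pow_comp {q : ℂ} (hq : ‖q‖ < 1) {g : ℕ → ℕ} (hg : Injective g) :
    Multipliable fun n ↦ 1 - q ^ g n := by
  simp only [sub_eq_add_neg]
  refine multipliable_one_add_of_summable ?_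
  simpa [Function.comp_def] using
    (summable_geometric_of_lt_one (norm_nonneg q) hq).comp_injective hg

lemma multipliable_one_sub_pow_odd {q : ℂ} (hq : ‖q‖ < 1) :
    Multipliable fun n : ℕ ↦ 1 - q ^ (2 * n + 1) :=
  multipliable_one_sub_pow_comp hq fun a b h ↦ by simpa using h

lemma oddEulerFunction_mul_eulerFunction_sq {q : ℂ} (hq : ‖q‖ < 1) :
    oddEulerFunction q * eulerFunction (q ^ 2) = eulerFunction q := by
  have heven : Multipliable fun n : ℕ ↦ 1 - q ^ (2 * n + 1 + 1) :=
    multipliable_one_sub_pow_comp hq fun a b h ↦ by simpa using h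
  rw [eulerFunction, eulerFunction,
    ← tprod_even_mul_odd (f := fun n ↦ 1 - q ^ (n + 1)) (multipliable_one_sub_pow_odd hq) heven]
  simp only [oddEulerFunction, ← pow_mul, mul_add, mul_one, add_assoc, one_add_one_eq_two]

lemma oddEulerFunction_mul_neg {q : ℂ} (hq : ‖q‖ < 1) :
    oddEulerFunction q * oddEulerFunction (-q) = oddEulerFunction (q ^ 2) := by
  rw [oddEulerFunction, oddEulerFunction, ← (multipliable_one_sub_pow_odd hq).tprod_mul
    (multipliable_one_sub_pow_odd (by rwa [norm_neg]))]
  refine tprod_congr fun n ↦ ?_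
  rw [(odd_two_mul_add_one n).neg_pow]
  ring

lemma tprod_one_sub_pow_mul_one_sub_pow_odd_sq {q : ℂ} (hq : ‖q‖ < 1) :
    ∏' j : ℕ, ((1 - (q ^ 2) ^ (j + 1)) * (1 - q ^ (2 * j + 1)) ^ 2) =
      eulerFunction (q ^ 2) * oddEulerFunction q ^ 2 := by
  have hodd := multipliable_one_sub_pow_odd hq
  have hq2 : ‖q ^ 2‖ < 1 := by simpa using pow_lt_one₀ (norm_nonneg q) hq two_ne_zero
  rw [(multipliable_one_sub_pow hq2).tprod_mul (hodd.pow 2), hodd.tprod_pow, eulerFunction,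
    oddEulerFunction]

lemma tendsto_eulerFunction_zero : Tendsto eulerFunction (𝓝 0) (𝓝 1) := by
  have h : ContinuousAt eulerFunction 0 := (differentiableOn_tprod_one_sub_pow.differentiableAt
    (Metric.ball_mem_nhds 0 one_pos)).continuousAt
  simpa [ContinuousAt, eulerFunction] using h

end EulerFunction

section Eta

lemma eta_eq_qParam_mul_eulerFunction (z : ℂ) : η z = 𝕢 24 z * eulerFunction (𝕢 1 z) := rfl

lemma qParam_add (h : ℝ) (z w : ℂ) : 𝕢 h (z + w) = 𝕢 h z * 𝕢 h w := by
  simp only [Periodic.qParam, ← Complex.exp_add]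
  ring_nf

lemma qParam_pow (h : ℝ) (z : ℂ) (n : ℕ) : 𝕢 h z ^ n = 𝕢 h (n * z) := by
  simp only [Periodic.qParam, ← Complex.exp_nat_mul]
  ring_nf

lemma qParam_self {h : ℝ} (hh : h ≠ 0) : 𝕢 h h = 1 := by
  rw [Periodic.qParam, mul_div_cancel_right₀ _ (by exact_mod_cast hh), Complex.exp_two_pi_mul_I]

lemma eta_add_natCast (z : ℂ) (n : ℕ) : η (z + n) = 𝕢 24 1 ^ n * η z := by
  have hn : 𝕢 1 n = 1 := by
    simpa [qParam_pow] using congrArg (· ^ n) (qParam_self one_ne_zero)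
  rw [eta_eq_qParam_mul_eulerFunction, eta_eq_qParam_mul_eulerFunction, qParam_add, qParam_add, hn,
    qParam_pow, mul_one, mul_one]
  ring

lemma eta_neg_one_div_pow_eight {z : ℂ} (hz : 0 < z.im) : η (-1 / z) ^ 8 = z ^ 4 * η z ^ 8 := by
  have sqrt_pow_eight (w : ℂ) : sqrt w ^ 8 = w ^ 4 := by
    rw [show 8 = 2 * 4 from rfl, pow_mul, Complex.sqrt, Complex.cpow_ofNat_inv_pow]
  have h : η (-1 / z) = (sqrt I)⁻¹ * (sqrt z * η z) := eta_comp_eq_csqrt_I_inv hz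
  rw [h, mul_pow, mul_pow, inv_pow, sqrt_pow_eight, sqrt_pow_eight, I_pow_four, inv_one, one_mul]

end Eta

section EtaQuot

/-- The eta quotient `η(τ)¹⁶ / η(mτ)⁸` of weight `4`. For `m = 2` it is `16 ε₁`, and for `m = 1/2`
it is, up to a factor, its transform under `S`. -/
noncomputable def etaQuot (m : ℝ) (τ : ℍ) : ℂ := η τ ^ 16 / η (m * τ) ^ 8

lemma mdifferentiable_etaQuot {m : ℝ} (hm : 0 < m) :
    MDifferentiable 𝓘(ℂ) 𝓘(ℂ) (etaQuot m) := by
  rw [UpperHalfPlane.mdifferentiable_iff]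
  suffices DifferentiableOn ℂ (fun z ↦ η z ^ 16 / η (m * z) ^ 8)
      UpperHalfPlane.upperHalfPlaneSet from
    this.congr fun z hz ↦ by simp [etaQuot, UpperHalfPlane.ofComplex_apply_of_im_pos hz]
  intro z hz
  have hmz : (m * z : ℂ) ∈ UpperHalfPlane.upperHalfPlaneSet := by
    simpa [UpperHalfPlane.upperHalfPlaneSet, hm] using hz
  have hη := differentiableAt_eta_of_mem_upperHalfPlaneSet hz
  have hηm : DifferentiableAt ℂ (fun z ↦ η (m * z)) z :=
    (differentiableAt_eta_of_mem_upperHalfPlaneSet hmz).comp z (by fun_prop)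
  exact ((hη.pow 16).div (hηm.pow 8) (pow_ne_zero _ (eta_ne_zero hmz))).differentiableWithinAt

lemma etaQuot_slash_S {m : ℝ} (hm : 0 < m) :
    etaQuot m ∣[(4 : ℤ)] S = ((m : ℂ) ^ 4) • etaQuot m⁻¹ := by
  ext τ
  have hτ := τ.ne_zero
  have hm0 : (m : ℂ) ≠ 0 := by exact_mod_cast hm.ne'
  have him : 0 < ((m⁻¹ : ℝ) * τ : ℂ).im := by simpa [hm] using τ.im_pos
  have hnum : η (-(τ : ℂ))⁻¹ ^ 16 = τ ^ 8 * η τ ^ 16 := by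
    rw [show (-(τ : ℂ))⁻¹ = -1 / τ by field_simp, show 16 = 8 * 2 from rfl, pow_mul,
      eta_neg_one_div_pow_eight τ.im_pos]
    ring
  have hden : η (m * (-(τ : ℂ))⁻¹) ^ 8 = ((m⁻¹ : ℝ) * τ) ^ 4 * η ((m⁻¹ : ℝ) * τ) ^ 8 := by
    rw [← eta_neg_one_div_pow_eight him]
    congr 2
    push_cast
    field_simp
  simp only [SL_slash_apply, UpperHalfPlane.modular_S_smul, denom_S, etaQuot, hnum, hden,
    Pi.smul_apply, smul_eq_mul]
  have := eta_ne_zero him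
  push_cast at this ⊢
  simp only [_root_.zpow_neg, zpow_ofNat]
  field_simp

lemma etaQuot_eq_qParam_mul (m : ℝ) (τ : ℍ) :
    etaQuot m τ = 𝕢 24 ((16 - 8 * m) * τ) *
      (eulerFunction (𝕢 1 τ) ^ 16 / eulerFunction (𝕢 1 (m * τ)) ^ 8) := by
  have hq : 𝕢 24 τ ^ 16 = 𝕢 24 ((16 - 8 * m) * τ) * 𝕢 24 (m * τ) ^ 8 := by
    rw [qParam_pow, qParam_pow, ← qParam_add]
    push_cast
    ring_nf
  have := Periodic.qParam_ne_zero (h := 24) (m * τ)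
  rw [etaQuot, eta_eq_qParam_mul_eulerFunction, eta_eq_qParam_mul_eulerFunction, mul_pow, mul_pow,
    hq]
  field_simp

-- The leading exponent of `q` is `(16 - 8m) / 24`, which is nonnegative exactly when `m ≤ 2`.
lemma isBoundedAtImInfty_etaQuot {m : ℝ} (hm : 0 < m) (hm2 : m ≤ 2) :
    UpperHalfPlane.IsBoundedAtImInfty (etaQuot m) := by
  have hlead : UpperHalfPlane.IsBoundedAtImInfty fun τ : ℍ ↦ 𝕢 24 ((16 - 8 * m) * τ) := by
    refine UpperHalfPlane.isBoundedAtImInfty_iff.mpr ⟨1, 0, fun τ _ ↦ ?_⟩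
    have hnonneg : 0 ≤ (16 - 8 * m) * τ.im := mul_nonneg (by linarith) τ.im_pos.le
    have him : ((16 - 8 * m) * τ : ℂ).im = (16 - 8 * m) * τ.im := by simp
    rw [Periodic.norm_qParam, Real.exp_le_one_iff, him]
    linarith [mul_nonneg Real.pi_pos.le hnonneg]
  have hτ := tendsto_eulerFunction_zero.comp (UpperHalfPlane.qParam_tendsto_atImInfty one_pos)
  have hmτ : Tendsto (fun τ : ℍ ↦ eulerFunction (𝕢 1 (m * τ)))
      UpperHalfPlane.atImInfty (𝓝 1) := by
    refine (tendsto_eulerFunction_zero.comp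
      (UpperHalfPlane.qParam_tendsto_atImInfty (inv_pos.mpr hm))).congr fun τ ↦ ?_
    simp only [Function.comp_apply, Periodic.qParam, ofReal_inv, div_inv_eq_mul, ofReal_one,
      div_one]
    ring_nf
  have hquot := ((hτ.pow 16).div (hmτ.pow 8) (by simp)).isBigO_one ℝ
  rw [funext (etaQuot_eq_qParam_mul m)]
  exact hlead.mul hquot

lemma etaQuot_slash_T_pow {m : ℝ} {n l : ℕ} (hl : m * n = l) (hmod : 2 * n ≡ l [MOD 3]) :
    etaQuot m ∣[(4 : ℤ)] (T ^ n) = etaQuot m := by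
  ext τ
  have hζ : 𝕢 24 1 ^ (n * 16) = 𝕢 24 1 ^ (l * 8) := by
    refine pow_eq_pow_of_modEq (n := 24) ?_ (by simpa [qParam_pow] using qParam_self (h := 24))
    rw [show n * 16 = 2 * n * 8 by ring]
    exact hmod.mul_right' 8
  have hm : (m * (τ + n) : ℂ) = m * τ + l := by
    rw [mul_add]
    exact_mod_cast congrArg (fun x : ℝ ↦ (m * τ + x : ℂ)) hl
  have hne := Periodic.qParam_ne_zero (h := 24) 1
  rw [← zpow_natCast, slash_T_zpow_apply, etaQuot, etaQuot, UpperHalfPlane.coe_vadd, add_comm]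
  push_cast
  rw [hm, eta_add_natCast, eta_add_natCast, mul_pow, mul_pow, ← pow_mul, ← pow_mul, hζ]
  field_simp

end EtaQuot

section Theta

lemma qh_eq_qParam (τ : ℂ) : qh τ = 𝕢 2 τ := by
  simp only [qh, Periodic.qParam]
  push_cast
  ring_nf

lemma norm_qh_lt_one (τ : ℍ) : ‖qh τ‖ < 1 := by
  simpa [qh_eq_qParam] using Periodic.norm_qParam_lt_one two_pos τ.im_pos

lemma qq_eq_qh_sq (τ : ℂ) : qq τ = qh τ ^ 2 := by
  rw [qq, qh, ← Complex.exp_nat_mul]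
  push_cast
  ring_nf

lemma norm_qq_lt_one (τ : ℍ) : ‖qq τ‖ < 1 := by
  rw [qq_eq_qh_sq, norm_pow]
  exact pow_lt_one₀ (norm_nonneg _) (norm_qh_lt_one τ) two_ne_zero

lemma theta2_eq_eulerFunction_mul (τ : ℍ) :
    theta2 τ = eulerFunction (qq τ) * oddEulerFunction (qh τ) ^ 2 := by
  simp only [theta2, qq_eq_qh_sq, tprod_one_sub_pow_mul_one_sub_pow_odd_sq (norm_qh_lt_one τ)]

lemma theta3_eq_eulerFunction_mul (τ : ℍ) :
    theta3 τ = eulerFunction (qq τ) * oddEulerFunction (-qh τ) ^ 2 := by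
  have h := tprod_one_sub_pow_mul_one_sub_pow_odd_sq (q := -qh τ)
    (by simpa using norm_qh_lt_one τ)
  simpa only [theta3, qq_eq_qh_sq, neg_sq, (odd_two_mul_add_one _).neg_pow, sub_neg_eq_add] using h

lemma theta2_mul_theta3 (τ : ℍ) : theta2 τ * theta3 τ = η τ ^ 4 / η (2 * τ) ^ 2 := by
  have h2τ : 𝕢 24 (2 * τ) * eulerFunction (𝕢 1 (2 * τ)) ≠ 0 :=
    eta_ne_zero (z := 2 * τ) (by simpa [UpperHalfPlane.upperHalfPlaneSet] using τ.im_pos)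
  have hqq : qq τ = 𝕢 1 τ := by simp [qq, Periodic.qParam]
  have hqq_sq : qq τ ^ 2 = 𝕢 1 (2 * τ) := by rw [hqq, qParam_pow]; norm_cast
  have hlead : 𝕢 24 (2 * τ) ^ 2 = 𝕢 24 τ ^ 4 := by
    rw [qParam_pow, qParam_pow]
    push_cast
    ring_nf
  have hodd : oddEulerFunction (qh τ) * oddEulerFunction (-qh τ) = oddEulerFunction (qq τ) := by
    rw [oddEulerFunction_mul_neg (norm_qh_lt_one τ), qq_eq_qh_sq]
  have hsplit : oddEulerFunction (qq τ) * eulerFunction (qq τ ^ 2) = eulerFunction (qq τ) :=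
    oddEulerFunction_mul_eulerFunction_sq (norm_qq_lt_one τ)
  rw [eta_eq_qParam_mul_eulerFunction, eta_eq_qParam_mul_eulerFunction,
    eq_div_iff (pow_ne_zero 2 h2τ)]
  calc theta2 τ * theta3 τ * (𝕢 24 (2 * τ) * eulerFunction (𝕢 1 (2 * τ))) ^ 2
      = 𝕢 24 (2 * τ) ^ 2 * (eulerFunction (qq τ) * (oddEulerFunction (qh τ) *
          oddEulerFunction (-qh τ) * eulerFunction (qq τ ^ 2))) ^ 2 := by
        rw [theta2_eq_eulerFunction_mul, theta3_eq_eulerFunction_mul, hqq_sq]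
        ring
    _ = (𝕢 24 τ * eulerFunction (𝕢 1 τ)) ^ 4 := by
        rw [hodd, hsplit, hlead, hqq]
        ring

lemma epsilon1_eq_etaQuot (τ : ℍ) : epsilon1 τ = etaQuot 2 τ / 16 := by
  rw [epsilon1, ← mul_pow, theta2_mul_theta3, etaQuot]
  push_cast
  ring

end Theta

/-- `ε₁` is a modular form of weight `4` over `Γ₀(2)`: there is a modular form of weight `4`
over `Γ₀(2)` (holomorphic on `ℍ`, holomorphic at the cusps, transforming with weight `4` under
`Γ₀(2)`) that coincides with `ε₁` on the upper half-plane. -/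
theorem epsilon1_modular_form_weight_four_Gamma0_two :
    ∃ F : ModularForm (Gamma0 2) 4, ∀ τ : ℍ, F τ = epsilon1 (τ : ℂ) := by
  have hS := etaQuot_slash_S two_pos
  have hT : etaQuot 2 ∣[(4 : ℤ)] T = etaQuot 2 := by
    simpa using etaQuot_slash_T_pow (m := 2) (n := 1) (l := 2) (by norm_num) rfl
  have hT_sq : etaQuot 2⁻¹ ∣[(4 : ℤ)] (T ^ 2) = etaQuot 2⁻¹ :=
    etaQuot_slash_T_pow (l := 1) (by norm_num) rfl
  have hS_bdd : UpperHalfPlane.IsBoundedAtImInfty (etaQuot 2 ∣[(4 : ℤ)] S) := by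
    rw [hS]
    exact (isBoundedAtImInfty_etaQuot (by norm_num) (by norm_num)).smul _
  obtain ⟨F, hF⟩ := exists_modularForm_Gamma0_two (mdifferentiable_etaQuot two_pos) hT
    (by rw [hS, SL_smul_slash, hT_sq]) (isBoundedAtImInfty_etaQuot two_pos le_rfl) hS_bdd
  refine ⟨(16⁻¹ : ℂ) • F, fun τ ↦ ?_⟩
  rw [epsilon1_eq_etaQuot, _root_.smul_apply, hF, smul_eq_mul, div_eq_inv_mul]
end

section
/- Every modular form f of weight 8 for the full modular group SL2(ℤ) is a constant multiple of E4(τ)^2: there exists c ∈ ℂ with f(τ) = c · E4(τ)^2 for all τ in the upper half-plane. -/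
open Complex Real

local notation "SL(2,ℤ)" => Matrix.SpecialLinearGroup (Fin 2) ℤ
local notation "ℍ" => UpperHalfPlane

/-- The divisor power sum `σ_k(n) = Σ_{d ∣ n} d^k`. -/
def sigma' (k n : ℕ) : ℕ := ∑ d ∈ n.divisors, d ^ k

/-- The Eisenstein series `E₄(τ) = 1 + 240 Σ_{n≥1} σ₃(n) e^{2πinτ}`. -/
noncomputable def E4 (τ : ℂ) : ℂ :=
  1 + 240 * ∑' n : ℕ, (sigma' 3 (n + 1) : ℂ) * Complex.exp (2 * π * Complex.I * τ) ^ (n + 1)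

/-!
Dividing a level-one cusp form of weight `k < 12` by the discriminant gives a modular form of
negative weight `k - 12`, so the cusp form vanishes. A level-one form of weight below `12` is
therefore determined by its constant term, and any two such forms of the same weight are
proportional as soon as one of them is nonzero. In weight `8` the nonzero form `E₄²` is available.
-/

section LevelOne

open ModularForm UpperHalfPlane
open scoped MatrixGroups

variable {k : ℤ}

lemma eq_zero_of_isCuspForm_of_weight_lt_twelve (hk : k < 12) {f : ModularForm 𝒮ℒ k}
    (hf : IsCuspForm f) : f = 0 := by
  obtain ⟨g, rfl⟩ := hf
  rw [rank_zero_iff_forall_zero.mp (CuspForm.rank_eq_zero_of_weight_lt_twelve hk) g, map_zero]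

lemma exists_eq_smul_of_weight_lt_twelve (hk : k < 12) {g : ModularForm 𝒮ℒ k} (hg : g ≠ 0)
    (f : ModularForm 𝒮ℒ k) : ∃ c : ℂ, f = c • g := by
  set a : ℂ := (qExpansion 1 g).coeff 0
  set b : ℂ := (qExpansion 1 f).coeff 0
  have ha : a ≠ 0 := fun h ↦ hg <|
    eq_zero_of_isCuspForm_of_weight_lt_twelve hk ((isCuspForm_iff_coeffZero_eq_zero g).mpr h)
  have normalized : (qExpansion 1 (a⁻¹ • g)).coeff 0 = 1 := by
    rw [ModularForm.qExpansion_smul one_pos one_mem_strictPeriods_SL,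
      PowerSeries.coeff_smul, smul_eq_mul, inv_mul_cancel₀ ha]
  have hf : f = b • a⁻¹ • g := sub_eq_zero.mp <|
    eq_zero_of_isCuspForm_of_weight_lt_twelve hk (sub_smul_isCuspForm f _ normalized)
  exact ⟨b * a⁻¹, by rw [mul_smul, ← hf]⟩

lemma modularForm_pow_ne_zero {Γ : Subgroup (GL (Fin 2) ℝ)} [Γ.HasDetPlusMinusOne]
    {f : ModularForm Γ k} (hf : f ≠ 0) (n : ℕ) : f.pow n ≠ 0 := by
  rw [← DFunLike.coe_injective.ne_iff] at hf ⊢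
  simpa only [coe_pow, FunLike.coe_zero] using pow_ne_zero n hf

end LevelOne

section QExpansion

lemma sigma'_eq_sigma (k n : ℕ) : sigma' k n = ArithmeticFunction.sigma k n :=
  ArithmeticFunction.sigma_apply.symm

lemma eisenstein_eq_one_sub_tsum_sigma' {k : ℕ} (hk : 3 ≤ k) (hk_even : Even k) (τ : ℍ) :
    ModularForm.E hk τ = 1 - (2 * k / bernoulli k) *
      ∑' n : ℕ, (sigma' (k - 1) (n + 1) : ℂ) *
        Complex.exp (2 * π * Complex.I * τ) ^ (n + 1) := by
  rw [EisensteinSeries.q_expansion_bernoulli hk hk_even, ← tsum_pnat_eq_tsum_succ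
    (f := fun n ↦ (sigma' (k - 1) n : ℂ) * Complex.exp (2 * π * Complex.I * τ) ^ n)]
  simp only [sigma'_eq_sigma, zpow_natCast]

lemma bernoulli_four : bernoulli 4 = -1 / 30 := by
  rw [bernoulli_eq_bernoulli'_of_ne_one (by norm_num), bernoulli'_four]

lemma E4_eq_E₄ (τ : ℍ) : E4 τ = ModularForm.E₄ τ := by
  rw [eisenstein_eq_one_sub_tsum_sigma' _ (by decide), bernoulli_four, E4]
  norm_num

end QExpansion

/-- Every modular form of weight `8` for the full modular group `SL(2,ℤ)` is a constant
multiple of `E₄²`. -/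
theorem weight_eight_eq_const_mul_E4_sq
    (f : ModularForm (⊤ : Subgroup SL(2,ℤ)) 8) :
    ∃ c : ℂ, ∀ τ : ℍ, f τ = c * E4 (τ : ℂ) ^ 2 := by
  have E₄_sq_ne_zero : ModularForm.E₄.pow 2 ≠ 0 :=
    modularForm_pow_ne_zero (EisensteinSeries.E_ne_zero _ (by decide)) 2
  obtain ⟨c, hc⟩ := exists_eq_smul_of_weight_lt_twelve (by norm_num) E₄_sq_ne_zero
    (f.copy f rfl (MonoidHom.range_eq_map _))
  refine ⟨c, fun τ ↦ ?_⟩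
  calc f τ = c * ModularForm.E₄.pow 2 τ := DFunLike.congr_fun hc τ
    _ = c * E4 τ ^ 2 := by rw [ModularForm.coe_pow, Pi.pow_apply, E4_eq_E₄]
end
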